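/- Let F ∈ S^d and S ∈ S^d satisfy S∘F = 0. If there is a quadratic form Q: S^d × S^d → R such that Q[W,W] + 2·tr(SΔ²) ≥ 0 for every Δ ∈ S^d with W = 2F∘Δ, then S ⪰ 0. -/

import Mathlib

open Matrix

/-- The symmetric product `A∘B = (ABᵀ + BAᵀ)/2`. -/
noncomputable def symProd {d : ℕ} (A B : Matrix (Fin d) (Fin d) ℝ) :
    Matrix (Fin d) (Fin d) ℝ :=
  (2⁻¹ : ℝ) • (A * Bᵀ + B * Aᵀ)

/-!
The values of `Q` only matter on two fibres of `L : Δ ↦ FΔ + ΔF`, on each of which the form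
`q(Δ) = re tr(SΔ²)` must be bounded below. On the fibre over `0` this says that `q ≥ 0` on the
kernel of `L`; on the fibre over `2F`, which contains the identity, it says that `re tr(SK) = 0`
for every Hermitian `K ∈ ker L` with `q(K) = 0`.

Since `S` and `F` anticommute, `K = FSF` is such a matrix, and `tr(SK) = -‖SF‖²`; hence `FS = 0`.
Eigenvectors of `S` with nonzero eigenvalue therefore lie in `ker F`, and for `v ∈ ker F` the
rank-one matrix `vvᴴ` lies in `ker L`, with `q(vvᴴ) = ‖v‖² re(vᴴSv)`.
-/

section OrderedField

variable {k : Type*} [Field k] [LinearOrder k] [IsStrictOrderedRing k] {a b c : k}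

theorem nonneg_of_forall_nonneg_mul_self_add (h : ∀ t : k, 0 ≤ a * (t * t) + c) : 0 ≤ a := by
  have hc : 0 ≤ c := by simpa using h 0
  have hdiscrim : discrim a 0 (c + 1) ≤ 0 :=
    discrim_le_zero fun t => by linarith [h t]
  have hmul : 0 ≤ a * (c + 1) := by
    rw [discrim] at hdiscrim
    linarith
  exact nonneg_of_mul_nonneg_left hmul (by linarith)

theorem eq_zero_of_forall_nonneg_mul_add (h : ∀ t : k, 0 ≤ b * t + c) : b = 0 := by
  have hdiscrim : discrim 0 b c ≤ 0 := discrim_le_zero fun t => by simpa using h t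
  simpa [discrim, sq_nonpos_iff] using hdiscrim

end OrderedField

theorem mul_sandwich_add_sandwich_mul_eq_zero {R : Type*} [NonUnitalRing R] {a b : R}
    (h : a * b + b * a = 0) : a * (a * b * a) + a * b * a * a = 0 := by
  calc a * (a * b * a) + a * b * a * a = a * (a * b + b * a) * a := by noncomm_ring
    _ = 0 := by rw [h, mul_zero, zero_mul]

section Trace

variable {n R : Type*} [Fintype n] [CommRing R] {A B F S : Matrix n n R}

theorem trace_mul_eq_zero_of_anticommute [IsAddTorsionFree R] (h : A * B + B * A = 0) :
    (A * B).trace = 0 := by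
  have htrace : (A * B).trace + (B * A).trace = 0 := by rw [← trace_add, h, trace_zero]
  rwa [trace_mul_comm B A, ← two_nsmul, smul_eq_zero_iff_right two_ne_zero] at htrace

theorem trace_mul_sandwich_mul_self_eq_zero [IsAddTorsionFree R] (h : F * S + S * F = 0) :
    (S * (F * S * F * (F * S * F))).trace = 0 := by
  -- Moving one factor `F` to the right exposes a product `(S * F * S * F * F * S) * F` whose left
  -- factor contains `S` an odd number of times, and so anticommutes with `F`.
  have hanti : S * F * S * F * F * S * F + F * (S * F * S * F * F * S) = 0 := by
    linear_combination (norm := noncomm_ring)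
      h * (F * S * F * F * S) - S * F * h * F * F * S + S * F * S * F * F * h
  simpa only [mul_assoc] using trace_mul_eq_zero_of_anticommute hanti

theorem trace_mul_sandwich_eq_neg [StarRing R] (hF : F.IsHermitian) (hS : S.IsHermitian)
    (h : F * S + S * F = 0) : (S * (F * S * F)).trace = -((F * S) * (F * S)ᴴ).trace := by
  calc (S * (F * S * F)).trace = (S * F * (S * F)).trace := by simp only [mul_assoc]
    _ = (-(F * S) * (S * F)).trace := by
        nth_rewrite 1 [eq_neg_of_add_eq_zero_right h]
        rfl
    _ = -((F * S) * (F * S)ᴴ).trace := by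
        rw [conjTranspose_mul, hF.eq, hS.eq, neg_mul, trace_neg]

end Trace

section HermitianMatrices

open scoped ComplexOrder

variable {m n 𝕜 : Type*} [Fintype n] [RCLike 𝕜] {F S K : Matrix n n 𝕜}

theorem posSemidef_of_nonneg_on_ker {A : Matrix m n 𝕜} (hS : S.IsHermitian)
    (hAS : A * S = 0) (hker : ∀ v, A *ᵥ v = 0 → 0 ≤ RCLike.re (star v ⬝ᵥ S *ᵥ v)) :
    S.PosSemidef := by
  classical
  refine hS.posSemidef_iff_eigenvalues_nonneg.mpr fun i => ?_
  by_cases hi : hS.eigenvalues i = 0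
  · exact hi.ge
  have hA : hS.eigenvalues i • A *ᵥ hS.eigenvectorBasis i = 0 := by
    rw [← mulVec_smul, ← hS.mulVec_eigenvectorBasis, mulVec_mulVec, hAS, zero_mulVec]
  rw [Pi.zero_apply, hS.eigenvalues_eq]
  exact hker _ ((smul_eq_zero.mp hA).resolve_left hi)

theorem mul_vecMulVec_star_add_eq_zero (hF : F.IsHermitian) {v : n → 𝕜} (hv : F *ᵥ v = 0) :
    F * vecMulVec v (star v) + vecMulVec v (star v) * F = 0 := by
  have hv' : star v ᵥ* F = 0 := by rw [← hF.eq, ← star_mulVec, hv, star_zero]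
  rw [mul_vecMulVec, vecMulVec_mul, hv, hv', zero_vecMulVec, vecMulVec_zero, add_zero]

theorem trace_mul_vecMulVec_star_mul_self (S : Matrix n n 𝕜) (v : n → 𝕜) :
    (S * (vecMulVec v (star v) * vecMulVec v (star v))).trace =
      (star v ⬝ᵥ v) * (star v ⬝ᵥ S *ᵥ v) := by
  rw [vecMulVec_mul_vecMulVec, mul_vecMulVec, trace_vecMulVec, dotProduct_smul, smul_eq_mul,
    dotProduct_comm (S *ᵥ v)]

theorem re_trace_mul_add_smul_mul_self (S Δ K : Matrix n n 𝕜) (t : ℝ) :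
    RCLike.re (S * ((Δ + t • K) * (Δ + t • K))).trace =
      RCLike.re (S * (K * K)).trace * (t * t) +
        RCLike.re (S * (Δ * K + K * Δ)).trace * t + RCLike.re (S * (Δ * Δ)).trace := by
  simp only [mul_add, add_mul, mul_smul_comm, smul_mul_assoc, trace_add, trace_smul, map_add,
    RCLike.smul_re]
  ring

theorem mul_add_smul_add_of_anticommute (hFK : F * K + K * F = 0) (Δ : Matrix n n 𝕜) (t : ℝ) :
    F * (Δ + t • K) + (Δ + t • K) * F = F * Δ + Δ * F := by
  calc F * (Δ + t • K) + (Δ + t • K) * F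
      = F * Δ + Δ * F + t • (F * K + K * F) := by
        simp only [mul_add, add_mul, mul_smul_comm, smul_mul_assoc, smul_add]
        abel
    _ = F * Δ + Δ * F := by rw [hFK, smul_zero, add_zero]

section Fibres

variable {Q : Matrix n n 𝕜 → ℝ}
  (hQ : ∀ Δ : Matrix n n 𝕜, Δ.IsHermitian →
    0 ≤ Q (F * Δ + Δ * F) + 2 * RCLike.re (S * (Δ * Δ)).trace)
include hQ

theorem nonneg_along_line_of_anticommute {Δ : Matrix n n 𝕜} (hΔ : Δ.IsHermitian)
    (hK : K.IsHermitian) (hFK : F * K + K * F = 0) (t : ℝ) :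
    0 ≤ 2 * RCLike.re (S * (K * K)).trace * (t * t) +
      2 * RCLike.re (S * (Δ * K + K * Δ)).trace * t +
      (Q (F * Δ + Δ * F) + 2 * RCLike.re (S * (Δ * Δ)).trace) := by
  have h := hQ (Δ + t • K) (hΔ.add (hK.smul (IsSelfAdjoint.all t)))
  rw [mul_add_smul_add_of_anticommute hFK, re_trace_mul_add_smul_mul_self] at h
  linarith

theorem re_trace_mul_mul_self_nonneg_of_anticommute (hK : K.IsHermitian)
    (hFK : F * K + K * F = 0) : 0 ≤ RCLike.re (S * (K * K)).trace := by
  have h := nonneg_along_line_of_anticommute hQ isHermitian_zero hK hFK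
  simp only [zero_mul, mul_zero, add_zero, trace_zero, map_zero] at h
  linarith [nonneg_of_forall_nonneg_mul_self_add h]

theorem re_trace_mul_eq_zero_of_anticommute (hK : K.IsHermitian)
    (hFK : F * K + K * F = 0) (hKK : RCLike.re (S * (K * K)).trace = 0) :
    RCLike.re (S * K).trace = 0 := by
  classical
  have h := nonneg_along_line_of_anticommute hQ isHermitian_one hK hFK
  simp only [hKK, one_mul, mul_one, mul_zero, zero_mul, zero_add, mul_add, trace_add, map_add] at h
  linarith [eq_zero_of_forall_nonneg_mul_add h]

theorem re_star_dotProduct_mulVec_nonneg_of_mulVec_eq_zero (hF : F.IsHermitian) {v : n → 𝕜}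
    (hv : F *ᵥ v = 0) : 0 ≤ RCLike.re (star v ⬝ᵥ S *ᵥ v) := by
  obtain rfl | hv0 := eq_or_ne v 0
  · simp
  have htrace := re_trace_mul_mul_self_nonneg_of_anticommute hQ
    (posSemidef_vecMulVec_self_star v).isHermitian (mul_vecMulVec_star_add_eq_zero hF hv)
  obtain ⟨hre, him⟩ := RCLike.pos_iff.mp (dotProduct_star_self_pos_iff.mpr hv0)
  rw [trace_mul_vecMulVec_star_mul_self, RCLike.mul_re, him, zero_mul, sub_zero] at htrace
  exact nonneg_of_mul_nonneg_right htrace hre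

theorem mul_eq_zero_of_anticommute (hF : F.IsHermitian) (hS : S.IsHermitian)
    (hFS : F * S + S * F = 0) : F * S = 0 := by
  have hK : (F * S * F).IsHermitian := by
    simpa only [hF.eq] using isHermitian_mul_mul_conjTranspose F hS
  have hre : RCLike.re ((F * S) * (F * S)ᴴ).trace = 0 := by
    have h := re_trace_mul_eq_zero_of_anticommute hQ hK (mul_sandwich_add_sandwich_mul_eq_zero hFS)
      (by rw [trace_mul_sandwich_mul_self_eq_zero hFS, map_zero])
    rwa [trace_mul_sandwich_eq_neg hF hS hFS, map_neg, neg_eq_zero] at h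
  have him : RCLike.im ((F * S) * (F * S)ᴴ).trace = 0 :=
    (RCLike.nonneg_iff.mp (posSemidef_self_mul_conjTranspose (F * S)).trace_nonneg).2
  exact trace_mul_conjTranspose_self_eq_zero_iff.mp
    (RCLike.ext (hre.trans (map_zero _).symm) (him.trans (map_zero _).symm))

end Fibres

theorem statement9_general (hF : F.IsHermitian) (hS : S.IsHermitian)
    (hSF : S * F + F * S = 0)
    (hQ : ∃ Q : Matrix n n 𝕜 → ℝ, ∀ Δ : Matrix n n 𝕜, Δ.IsHermitian →
      0 ≤ Q (F * Δ + Δ * F) + 2 * RCLike.re (S * (Δ * Δ)).trace) :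
    S.PosSemidef := by
  obtain ⟨Q, hQ⟩ := hQ
  have hFS : F * S + S * F = 0 := by rwa [add_comm]
  exact posSemidef_of_nonneg_on_ker hS (mul_eq_zero_of_anticommute hQ hF hS hFS) fun v hv =>
    re_star_dotProduct_mulVec_nonneg_of_mulVec_eq_zero hQ hF hv

end HermitianMatrices

theorem two_smul_symProd {d : ℕ} {A B : Matrix (Fin d) (Fin d) ℝ} (hA : A.IsSymm)
    (hB : B.IsSymm) : (2 : ℝ) • symProd A B = A * B + B * A := by
  rw [symProd, hA.eq, hB.eq, smul_inv_smul₀ two_ne_zero]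

theorem mul_add_mul_eq_zero_of_symProd_eq_zero {d : ℕ} {A B : Matrix (Fin d) (Fin d) ℝ}
    (hA : A.IsSymm) (hB : B.IsSymm) (h : symProd A B = 0) : A * B + B * A = 0 := by
  rw [← two_smul_symProd hA hB, h, smul_zero]

/-- Let `F, S ∈ S^d` with `S∘F = 0`. If there is a quadratic form `Q` such that
`Q[W,W] + 2·tr(SΔ²) ≥ 0` for every symmetric `Δ`, where `W = 2F∘Δ`, then `S ⪰ 0`. -/
theorem statement9 {d : ℕ}
    (F S : Matrix (Fin d) (Fin d) ℝ) (hFsymm : F.IsSymm) (hSsymm : S.IsSymm)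
    (hSF : symProd S F = 0)
    (hQ : ∃ Q : QuadraticForm ℝ (Matrix (Fin d) (Fin d) ℝ),
      ∀ Δ : Matrix (Fin d) (Fin d) ℝ, Δ.IsSymm →
        0 ≤ Q ((2 : ℝ) • symProd F Δ) + 2 * (S * (Δ * Δ)).trace) :
    S.PosSemidef := by
  obtain ⟨Q, hQ⟩ := hQ
  refine statement9_general (isHermitian_iff_isSymm.mpr hFsymm) (isHermitian_iff_isSymm.mpr hSsymm)
    (mul_add_mul_eq_zero_of_symProd_eq_zero hSsymm hFsymm hSF) ⟨Q, fun Δ hΔ => ?_⟩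
  rw [isHermitian_iff_isSymm] at hΔ
  simpa only [two_smul_symProd hFsymm hΔ, RCLike.re_to_real] using hQ Δ hΔ
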